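/- Let η ∈ S_{L,M}, write {j | a_j = 0, a_{j+1} = 1} = {i_1 < i_2 < ⋯ < i_N} and {j | a_j = 1, a_{j+1} = 0} = {k_1 < k_2 < ⋯ < k_N}, and adopt the conventions k_0 = −1 and η_{−1} = L. Then the soliton sequence has the closed form d(η) = 0^{s_1}1^{t_1}0^{s_2}1^{t_2}⋯1^{t_N}0^∞ with s_m = L + ∑_{j=k_{m−1}}^{i_m−1}(L − η_j − η_{j+1}) and t_m = L + ∑_{j=i_m}^{k_m−1}(η_j + η_{j+1} − L) for m = 1, 2, …, N. -/

import Mathlib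

namespace BBS

attribute [local instance] Classical.propDecidable

noncomputable section

/-- Carrier sequence with initial load `m` for box capacity `L`. -/
def carrierM (L m : ℤ) (η : ℕ → ℤ) : ℕ → ℤ
  | 0 => m
  | j + 1 => η j + max 0 (η j + carrierM L m η j - L)

/-- Carrier sequence (initial load `0`). -/
def carrier (L : ℤ) (η : ℕ → ℤ) : ℕ → ℤ := carrierM L 0 η

/-- Time evolution `T_L`. -/
def evol (L : ℤ) (η : ℕ → ℤ) (j : ℕ) : ℤ := min (L - η j) (carrier L η j)

/-- Time evolution `T_1^m` on binary sequences. -/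
def evolOne (m : ℤ) (w : ℕ → ℤ) (j : ℕ) : ℤ := min (1 - w j) (carrierM 1 m w j)

/-- Membership in `S_{L,M}`. -/
def mem_S (L M : ℤ) (η : ℕ → ℤ) : Prop :=
  (∃ N : ℕ, ∀ j, N ≤ j → η j = 0) ∧
  (∀ j, -M ≤ η j ∧ η j ≤ L + M) ∧
  η 0 ≤ 0 ∧
  (∀ j, max (-η j) (η j - L) ≤ M) ∧
  (∃ j, max (-η j) (η j - L) = M) ∧
  (∀ i : ℕ, ∑ j ∈ Finset.range (i + 2), η j ≤ ∑ j ∈ Finset.range (i + 1), (L - η j))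

/-- Auxiliary sequence for the backward carrier. -/
def backAux (L : ℤ) (η : ℕ → ℤ) (x : ℕ) : ℕ → ℤ
  | 0 => 0
  | n + 1 => η (x - n - 1) + max 0 (η (x - n - 1) + backAux L η x n - L)

/-- Backward carrier `ū` computed from the index `x`. -/
def backCarrier (L : ℤ) (η : ℕ → ℤ) (x j : ℕ) : ℤ :=
  if x ≤ j then 0 else backAux L η x (x - j)

/-- Reverse time evolution `R_L` computed from the index `x`. -/
def revol (L : ℤ) (η : ℕ → ℤ) (x j : ℕ) : ℤ :=
  if j < x then min (L - η j) (backCarrier L η x (j + 1)) else 0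

/-- The concatenated word sequence `r_K(η)`. -/
def rSeq (L M : ℕ) (K : Set ℕ) (η : ℕ → ℤ) (n : ℕ) : ℤ :=
  if (n / (L + 2 * M) ∈ K ∧ ((n % (L + 2 * M) : ℕ) : ℤ) < η (n / (L + 2 * M)) + M) ∨
      (n / (L + 2 * M) ∉ K ∧
        (L : ℤ) + 2 * M - (η (n / (L + 2 * M)) + M) ≤ ((n % (L + 2 * M) : ℕ) : ℤ))
  then 1 else 0

/-- The concatenated word sequence `l_K(η)`. -/
def lSeq (L M : ℕ) (K : Set ℕ) (η : ℕ → ℤ) (n : ℕ) : ℤ :=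
  if (n / (L + 2 * M) ∈ K ∧
        (L : ℤ) + 2 * M - (η (n / (L + 2 * M)) + M) ≤ ((n % (L + 2 * M) : ℕ) : ℤ)) ∨
      (n / (L + 2 * M) ∉ K ∧ ((n % (L + 2 * M) : ℕ) : ℤ) < η (n / (L + 2 * M)) + M)
  then 1 else 0

/-- Soliton flag sequence `a(η)`. -/
def flag (L : ℤ) (η : ℕ → ℤ) : ℕ → ℤ
  | 0 => 0
  | j + 1 =>
    if η j + η (j + 1) < L then 0
    else if η j + η (j + 1) = L then flag L η j else 1

/-- Primed soliton flag sequence `a′(η)` (with the convention `a′_{-1} = 0`). -/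
def flag' (L : ℤ) (η : ℕ → ℤ) : ℕ → ℤ
  | 0 => if η 0 + η 1 < L then 0 else if η 0 + η 1 = L then 0 else 1
  | j + 1 =>
    if η (j + 1) + η (j + 2) < L then 0
    else if η (j + 1) + η (j + 2) = L then flag' L η j else 1

/-- `I(η)`: right ends of contiguous 1-segments. -/
def Iset (L : ℤ) (η : ℕ → ℤ) : Set ℕ := {j | flag L η j = 1 ∧ flag L η (j + 1) = 0}

/-- `I′(η)`: left ends of contiguous right-1-segments. -/
def Iset' (L : ℤ) (η : ℕ → ℤ) : Set ℕ :=
  {j | (∀ k, j = k + 1 → flag' L η k = 0) ∧ flag' L η j = 1}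

def marked (L : ℤ) (η : ℕ → ℤ) (j : ℕ) : Prop := j ∈ Iset L η ∨ j + 1 ∈ Iset L η

def marked' (L : ℤ) (η : ℕ → ℤ) (j : ℕ) : Prop :=
  j ∈ Iset' L η ∨ ∃ k, j = k + 1 ∧ k ∈ Iset' L η

/-- Arc-count sequence `b̃(η)`. -/
def btilde (L M : ℕ) (η : ℕ → ℤ) (j : ℕ) : ℤ :=
  if marked (L : ℤ) η j then 0
  else min (η j + M) ((L : ℤ) + 2 * M - (η (j + 1) + M))

/-- `b̃_{j-1}` with the convention `b̃_{-1} = 0`. -/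
def bprev (L M : ℕ) (η : ℕ → ℤ) : ℕ → ℤ
  | 0 => 0
  | j + 1 => btilde L M η j

/-- Primed arc-count sequence `b̃′(η)`. -/
def btilde' (L M : ℕ) (η : ℕ → ℤ) : ℕ → ℤ
  | 0 => if marked' (L : ℤ) η 0 then 0 else η 0 + M
  | j + 1 =>
    if marked' (L : ℤ) η (j + 1) then 0
    else min (η (j + 1) + M) ((L : ℤ) + 2 * M - (η j + M))

/-- Background sequence `c(η)`: subsequence of `b̃` on unmarked indices, lowered by `M`. -/
def bg (L M : ℕ) (η : ℕ → ℤ) (j : ℕ) : ℤ :=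
  btilde L M η (Nat.nth (fun i => ¬ marked (L : ℤ) η i) j) - M

/-- Primed background sequence `c′(η)`. -/
def bg' (L M : ℕ) (η : ℕ → ℤ) (j : ℕ) : ℤ :=
  btilde' L M η (Nat.nth (fun i => ¬ marked' (L : ℤ) η i) j) - M

/-- Length of the word corresponding to box `j` in `d̃(η)`. -/
def wordLen (L M : ℕ) (η : ℕ → ℤ) (j : ℕ) : ℕ :=
  if j ∈ Iset (L : ℤ) η then L + 2 * M
  else ((L : ℤ) + 2 * M - bprev L M η j - btilde L M η j).toNat

def wordStart (L M : ℕ) (η : ℕ → ℤ) (j : ℕ) : ℕ :=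
  ∑ k ∈ Finset.range j, wordLen L M η k

/-- Raised soliton word sequence `d̃(η)`. -/
def dTilde (L M : ℕ) (η : ℕ → ℤ) (n : ℕ) : ℤ :=
  if ∃ j, wordStart L M η j ≤ n ∧ n < wordStart L M η (j + 1) ∧
      ((j ∈ Iset (L : ℤ) η ∧ ((n - wordStart L M η j : ℕ) : ℤ) < η j + M) ∨
        (j ∉ Iset (L : ℤ) η ∧
          (L : ℤ) + 2 * M - (η j + M) - bprev L M η j ≤ ((n - wordStart L M η j : ℕ) : ℤ)))
  then 1 else 0

/-- Length of the word corresponding to box `j` in `d̃′(η)`. -/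
def wordLen' (L M : ℕ) (η : ℕ → ℤ) (j : ℕ) : ℕ :=
  if j ∈ Iset' (L : ℤ) η then L + 2 * M
  else ((L : ℤ) + 2 * M - btilde' L M η j - btilde' L M η (j + 1)).toNat

def wordStart' (L M : ℕ) (η : ℕ → ℤ) (j : ℕ) : ℕ :=
  ∑ k ∈ Finset.range j, wordLen' L M η k

/-- Primed raised soliton word sequence `d̃′(η)`. -/
def dTilde' (L M : ℕ) (η : ℕ → ℤ) (n : ℕ) : ℤ :=
  if ∃ j, wordStart' L M η j ≤ n ∧ n < wordStart' L M η (j + 1) ∧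
      ((j ∈ Iset' (L : ℤ) η ∧
          (L : ℤ) + 2 * M - (η j + M) ≤ ((n - wordStart' L M η j : ℕ) : ℤ)) ∨
        (j ∉ Iset' (L : ℤ) η ∧
          ((n - wordStart' L M η j : ℕ) : ℤ) < η j + M - btilde' L M η j))
  then 1 else 0

/-- The sequence `0^{s 1}1^{t 1}0^{s 2}1^{t 2}⋯0^{s N}1^{t N}0^∞`. -/
def runSeq (N : ℕ) (s t : ℕ → ℕ) (n : ℕ) : ℤ :=
  if ∃ m, 1 ≤ m ∧ m ≤ N ∧
      (∑ k ∈ Finset.Icc 1 (m - 1), (s k + t k)) + s m ≤ n ∧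
      n < ∑ k ∈ Finset.Icc 1 m, (s k + t k)
  then 1 else 0

/-- `w = 0^{s 1}1^{t 1}⋯1^{t N}0^∞` is the (maximal) run decomposition of `w`. -/
def IsRunDecomp (N : ℕ) (s t : ℕ → ℕ) (w : ℕ → ℤ) : Prop :=
  (∀ m, 1 ≤ m → m ≤ N → 1 ≤ t m) ∧ (∀ m, 2 ≤ m → m ≤ N → 1 ≤ s m) ∧ w = runSeq N s t

def shrinkS (M : ℕ) (s : ℕ → ℕ) (m : ℕ) : ℕ := if m = 1 then s 1 - M else s m - 2 * M

def shrinkT (M : ℕ) (t : ℕ → ℕ) (m : ℕ) : ℕ := t m - 2 * M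

/-- `d` is the soliton sequence `d(η)`. -/
def IsSolitonSeq (L M : ℕ) (η : ℕ → ℤ) (d : ℕ → ℤ) : Prop :=
  ∃ N s t, IsRunDecomp N s t (dTilde L M η) ∧ d = runSeq N (shrinkS M s) (shrinkT M t)

/-- `d` is the primed soliton sequence `d′(η)`. -/
def IsSolitonSeq' (L M : ℕ) (η : ℕ → ℤ) (d : ℕ → ℤ) : Prop :=
  ∃ N s t, IsRunDecomp N s t (dTilde' L M η) ∧ d = runSeq N (shrinkS M s) (shrinkT M t)

/-- Forward shift `Λ`. -/
def lam (c : ℕ → ℤ) : ℕ → ℤ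
  | 0 => 0
  | j + 1 => c j

/-- Membership in the background space `S^{(b)}_{L,M}`. -/
def mem_Sb (L M : ℤ) (c : ℕ → ℤ) : Prop := mem_S L M c ∧ ∀ j, c j + c (j + 1) ≤ L

/-- Membership in the soliton space `S^{(f)}_L`: a binary sequence with finitely many
ones all of whose maximal runs of equal letters have length greater than `L`. -/
def mem_Sf (L : ℕ) (w : ℕ → ℤ) : Prop :=
  (∀ n, w n = 0 ∨ w n = 1) ∧ (∃ N : ℕ, ∀ n, N ≤ n → w n = 0) ∧
  ∀ n m : ℕ, n ≤ m → (∀ j, n ≤ j → j ≤ m → w j = w n) →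
    (n = 0 ∨ w (n - 1) ≠ w n) → w (m + 1) ≠ w m → L < m + 1 - n

/-- Stages of the iterative arc-pairing construction: at each stage, connect every pair
`i < j` of yet-unpaired positions with `w i = a`, `w j = b` such that every position
strictly between them is already paired. -/
def arcStage (a b : ℤ) (w : ℕ → ℤ) : ℕ → Set (ℕ × ℕ)
  | 0 => ∅
  | k + 1 => arcStage a b w k ∪
      {p : ℕ × ℕ | p.1 < p.2 ∧ w p.1 = a ∧ w p.2 = b ∧
        (∀ q ∈ arcStage a b w k, p.1 ≠ q.1 ∧ p.1 ≠ q.2 ∧ p.2 ≠ q.1 ∧ p.2 ≠ q.2) ∧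
        (∀ m, p.1 < m → m < p.2 → ∃ q ∈ arcStage a b w k, m = q.1 ∨ m = q.2)}

/-- The arc pairing: `arcPairing 1 0 w` is the 10-arc pairing of `w`, and
`arcPairing 0 1 w` is the 01-arc pairing of `w`. -/
def arcPairing (a b : ℤ) (w : ℕ → ℤ) : Set (ℕ × ℕ) := ⋃ k, arcStage a b w k

/-- Extension of `η` to integer indices with `η_j = L` for `j < 0`. -/
def etaExt (L : ℕ) (η : ℕ → ℤ) (j : ℤ) : ℤ := if j < 0 then (L : ℤ) else η j.toNat

end

end BBS

open BBS

/-!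
Let `oneLo j` and `oneHi j` be the positions at which the ones of the `j`-th word of `d̃` begin and
end. Inside a soliton, where the flag is `1`, each arc count `b̃ j` equals `L̃ - η̃ (j + 1)`, so
that word `j + 1` has no leading zeros and `oneHi j = oneLo (j + 1)`. Outside the solitons
`b̃ j = η̃ j`, so that word `j` has no ones at all. The maximal runs of ones of `d̃` are therefore
the intervals from `oneLo (i m)` to `oneHi (k m)`. Across consecutive boxes these positions change
by `±(η j + η (j + 1) - L)`, except at the marked boxes around `k m`, which contribute an extra
`L̃ = L + 2 M`: the run lengths telescope to the claimed sums, raised by `2 M` (by `M` for the first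
run of zeros). Apart from a possibly empty first run of zeros the runs are nonempty, so this is the
run decomposition of `d̃`.
-/

namespace BBS

section RunDecomposition

variable {N N' m n : ℕ} {s t s' t' : ℕ → ℕ} {w : ℕ → ℤ}

/-- The length of the word `0^{s 1}1^{t 1}⋯0^{s m}1^{t m}`. -/
def runEnd (s t : ℕ → ℕ) (m : ℕ) : ℕ := ∑ k ∈ Finset.Icc 1 m, (s k + t k)

@[simp]
theorem runEnd_zero (s t : ℕ → ℕ) : runEnd s t 0 = 0 := rfl

theorem runEnd_succ (s t : ℕ → ℕ) (m : ℕ) :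
    runEnd s t (m + 1) = runEnd s t m + (s (m + 1) + t (m + 1)) :=
  Finset.sum_Icc_succ_top (Nat.le_add_left 1 m) _

theorem runEnd_mono (s t : ℕ → ℕ) : Monotone (runEnd s t) :=
  monotone_nat_of_le_succ fun m => by simp only [runEnd_succ, Nat.le_add_right]

theorem runEnd_congr (h : ∀ q, 1 ≤ q → q ≤ m → s q = s' q ∧ t q = t' q) :
    runEnd s t m = runEnd s' t' m := by
  refine Finset.sum_congr rfl fun q hq => ?_
  obtain ⟨hq1, hqm⟩ := Finset.mem_Icc.1 hq
  rw [(h q hq1 hqm).1, (h q hq1 hqm).2]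

theorem exists_one_le_le_iff {p : ℕ → Prop} :
    (∃ m, 1 ≤ m ∧ m ≤ N ∧ p m) ↔ ∃ m < N, p (m + 1) := by
  constructor
  · rintro ⟨m, h1, hN, hp⟩
    obtain ⟨m, rfl⟩ := Nat.exists_eq_add_of_le' h1
    exact ⟨m, hN, hp⟩
  · rintro ⟨m, hN, hp⟩
    exact ⟨m + 1, Nat.le_add_left 1 m, hN, hp⟩

theorem runSeq_eq_one_iff : runSeq N s t n = 1 ↔
    ∃ m < N, runEnd s t m + s (m + 1) ≤ n ∧ n < runEnd s t (m + 1) := by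
  refine Iff.trans ?_ (exists_one_le_le_iff
    (p := fun m => runEnd s t (m - 1) + s m ≤ n ∧ n < runEnd s t m))
  simp only [runSeq, runEnd, ite_eq_left_iff, zero_ne_one, imp_false, not_not]

theorem runSeq_eq_zero_or_one (N : ℕ) (s t : ℕ → ℕ) (n : ℕ) :
    runSeq N s t n = 0 ∨ runSeq N s t n = 1 := by
  unfold runSeq
  split_ifs <;> simp

theorem binary_ext {w w' : ℕ → ℤ} (hw : ∀ n, w n = 0 ∨ w n = 1) (hw' : ∀ n, w' n = 0 ∨ w' n = 1)
    (h : ∀ n, w n = 1 ↔ w' n = 1) : w = w' := by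
  funext n
  have := h n
  rcases hw n with h0 | h0 <;> rcases hw' n with h1 | h1 <;> simp_all

theorem runSeq_congr (h : ∀ q, 1 ≤ q → q ≤ N → s q = s' q ∧ t q = t' q) :
    runSeq N s t = runSeq N s' t' := by
  refine binary_ext (runSeq_eq_zero_or_one N s t) (runSeq_eq_zero_or_one N s' t') fun n => ?_
  rw [runSeq_eq_one_iff, runSeq_eq_one_iff]
  refine exists_congr fun m => and_congr_right fun hm => ?_
  have heq {p : ℕ} (hp : p ≤ N) : runEnd s t p = runEnd s' t' p :=
    runEnd_congr fun q hq1 hqp => h q hq1 (hqp.trans hp)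
  rw [heq hm.le, heq hm, (h (m + 1) (Nat.le_add_left 1 m) hm).1]

namespace IsRunDecomp

theorem eq_one_iff (h : IsRunDecomp N s t w) : w n = 1 ↔
    ∃ m < N, runEnd s t m + s (m + 1) ≤ n ∧ n < runEnd s t (m + 1) := by
  rw [h.2.2, runSeq_eq_one_iff]

theorem apply_runEnd_succ_ne_one (h : IsRunDecomp N s t w) (m : ℕ) :
    w (runEnd s t (m + 1)) ≠ 1 := by
  rw [Ne, h.eq_one_iff]
  rintro ⟨p, hpN, hle, hlt⟩
  have hmp : m + 1 ≤ p := by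
    by_contra! hpm
    exact hlt.not_ge (runEnd_mono s t hpm)
  have hs := h.2.1 (p + 1) (by omega) hpN
  have := runEnd_mono s t hmp
  omega

theorem lt_and_zeros_le (h : IsRunDecomp N s t w) (h' : IsRunDecomp N' s' t' w) (hm : m < N)
    (heq : runEnd s t m = runEnd s' t' m) : m < N' ∧ s' (m + 1) ≤ s (m + 1) := by
  have hone : w (runEnd s t m + s (m + 1)) = 1 := by
    have := h.1 (m + 1) (Nat.le_add_left 1 m) hm
    exact h.eq_one_iff.2 ⟨m, hm, le_rfl, by rw [runEnd_succ]; omega⟩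
  obtain ⟨p, hpN, hle, hlt⟩ := h'.eq_one_iff.1 hone
  have hmp : m ≤ p := by
    by_contra! hpm
    have := runEnd_mono s' t' (show p + 1 ≤ m from hpm)
    omega
  refine ⟨hmp.trans_lt hpN, ?_⟩
  rcases hmp.eq_or_lt with rfl | hmp
  · omega
  · have := runEnd_mono s' t' (show m + 1 ≤ p from hmp)
    rw [runEnd_succ] at this
    omega

theorem runEnd_succ_le (h : IsRunDecomp N s t w) (h' : IsRunDecomp N' s' t' w) (hm : m < N)
    (heq : runEnd s t m = runEnd s' t' m) (hs : s (m + 1) = s' (m + 1)) :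
    runEnd s t (m + 1) ≤ runEnd s' t' (m + 1) := by
  by_contra! hlt
  refine h'.apply_runEnd_succ_ne_one m (h.eq_one_iff.2 ⟨m, hm, ?_, hlt⟩)
  rw [runEnd_succ]
  omega

theorem lengths_eq (h : IsRunDecomp N s t w) (h' : IsRunDecomp N' s' t' w) (hm : m ≤ N) :
    m ≤ N' ∧ ∀ q, 1 ≤ q → q ≤ m → s q = s' q ∧ t q = t' q := by
  induction m with
  | zero => exact ⟨Nat.zero_le N', fun q h1 h0 => by omega⟩
  | succ m ih =>
    have hlengths := (ih (by omega)).2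
    have heq : runEnd s t m = runEnd s' t' m := runEnd_congr hlengths
    obtain ⟨hm', hs'⟩ := h.lt_and_zeros_le h' hm heq
    have hs : s (m + 1) = s' (m + 1) := (h'.lt_and_zeros_le h hm' heq.symm).2.antisymm hs'
    have ht : t (m + 1) = t' (m + 1) := by
      have hend := (h.runEnd_succ_le h' hm heq hs).antisymm
        (h'.runEnd_succ_le h hm' heq.symm hs.symm)
      rw [runEnd_succ, runEnd_succ] at hend
      omega
    refine ⟨hm', fun q hq1 hq => ?_⟩
    rcases hq.eq_or_lt with rfl | hq
    · exact ⟨hs, ht⟩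
    · exact hlengths q hq1 (by omega)

theorem unique (h : IsRunDecomp N s t w) (h' : IsRunDecomp N' s' t' w) :
    N = N' ∧ ∀ q, 1 ≤ q → q ≤ N → s q = s' q ∧ t q = t' q :=
  ⟨(h.lengths_eq h' le_rfl).1.antisymm (h'.lengths_eq h le_rfl).1, (h.lengths_eq h' le_rfl).2⟩

end IsRunDecomp

theorem IsSolitonSeq.eq_runSeq {L M : ℕ} {η d : ℕ → ℤ} (hd : IsSolitonSeq L M η d)
    (h : IsRunDecomp N s t (dTilde L M η)) : d = runSeq N (shrinkS M s) (shrinkT M t) := by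
  obtain ⟨N', s', t', h', rfl⟩ := hd
  obtain ⟨rfl, heq⟩ := h'.unique h
  refine runSeq_congr fun q hq1 hqN => ?_
  simp only [shrinkS, shrinkT, heq q hq1 hqN, heq 1 le_rfl (hq1.trans hqN), and_self]

/-- The lengths of the runs of zeros before `shrinkS` is applied: the inverse of `shrinkS M`. -/
def raiseS (M : ℕ) (s : ℕ → ℕ) (m : ℕ) : ℕ := if m = 1 then s 1 + M else s m + 2 * M

/-- The lengths of the runs of ones before `shrinkT` is applied: the inverse of `shrinkT M`. -/
def raiseT (M : ℕ) (t : ℕ → ℕ) (m : ℕ) : ℕ := t m + 2 * M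

theorem shrinkS_raiseS (M : ℕ) (s : ℕ → ℕ) : shrinkS M (raiseS M s) = s := by
  funext m
  by_cases hm : m = 1 <;> simp [shrinkS, raiseS, hm]

theorem shrinkT_raiseT (M : ℕ) (t : ℕ → ℕ) : shrinkT M (raiseT M t) = t := by
  funext m
  simp [shrinkT, raiseT]

theorem le_raiseS (M : ℕ) (s : ℕ → ℕ) (m : ℕ) : s m ≤ raiseS M s m := by
  unfold raiseS
  split_ifs with hm
  · simp [hm]
  · omega

end RunDecomposition

section Switches

/-- The set `A` is the union of the intervals `(i m, k m]`, `1 ≤ m ≤ N`, presented through the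
positions `i m` and `k m` at which membership in `A` switches on and off. Positions are integers so
that `k 0 = -1` can serve as the initial off-switch. -/
structure IsSwitchEnum (A : Set ℕ) (N : ℕ) (i k : ℕ → ℤ) : Prop where
  zero_notMem : 0 ∉ A
  off_zero : k 0 = -1
  on_iff : ∀ j : ℕ, (j ∉ A ∧ j + 1 ∈ A) ↔ ∃ m < N, (j : ℤ) = i (m + 1)
  off_iff : ∀ j : ℕ, (j ∈ A ∧ j + 1 ∉ A) ↔ ∃ m < N, (j : ℤ) = k (m + 1)
  off_lt_on : ∀ m < N, k m < i (m + 1)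
  on_lt_off : ∀ m < N, i (m + 1) < k (m + 1)

namespace IsSwitchEnum

variable {A : Set ℕ} {N m : ℕ} {i k : ℕ → ℤ}

theorem off_mono (h : IsSwitchEnum A N i k) {p q : ℕ} (hpq : p ≤ q) (hq : q ≤ N) : k p ≤ k q := by
  induction q, hpq using Nat.le_induction with
  | base => exact le_rfl
  | succ q _ ih => exact (ih (by omega)).trans ((h.off_lt_on q hq).trans (h.on_lt_off q hq)).le

theorem off_lt_on_of_le (h : IsSwitchEnum A N i k) {p q : ℕ} (hpq : p ≤ q) (hq : q < N) :
    k p < i (q + 1) :=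
  (h.off_mono hpq hq.le).trans_lt (h.off_lt_on q hq)

theorem on_nonneg (h : IsSwitchEnum A N i k) (hm : m < N) : 0 ≤ i (m + 1) := by
  have := h.off_lt_on_of_le (Nat.zero_le m) hm
  have := h.off_zero
  omega

theorem off_nonneg (h : IsSwitchEnum A N i k) (hm : m < N) : 0 ≤ k (m + 1) :=
  (h.on_nonneg hm).trans (h.on_lt_off m hm).le

theorem mem_iff (h : IsSwitchEnum A N i k) {j : ℕ} :
    j ∈ A ↔ ∃ m < N, i (m + 1) < j ∧ (j : ℤ) ≤ k (m + 1) := by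
  induction j with
  | zero =>
    refine iff_of_false h.zero_notMem ?_
    rintro ⟨m, hm, hi, -⟩
    exact hi.not_ge (h.on_nonneg hm)
  | succ j ih =>
    push_cast
    constructor
    · intro hj1
      by_cases hj : j ∈ A
      · obtain ⟨m, hm, hi, hk⟩ := ih.1 hj
        have hne : (j : ℤ) ≠ k (m + 1) := fun hjk => ((h.off_iff j).2 ⟨m, hm, hjk⟩).2 hj1
        exact ⟨m, hm, by omega, by omega⟩
      · obtain ⟨m, hm, hi⟩ := (h.on_iff j).1 ⟨hj, hj1⟩
        have := h.on_lt_off m hm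
        exact ⟨m, hm, by omega, by omega⟩
    · rintro ⟨m, hm, hi, hk⟩
      rcases (Int.lt_add_one_iff.1 hi).eq_or_lt with hi | hi
      · exact ((h.on_iff j).2 ⟨m, hm, hi.symm⟩).2
      by_contra hj1
      obtain ⟨p, hp, hjp⟩ := (h.off_iff j).1 ⟨ih.2 ⟨m, hm, hi, by omega⟩, hj1⟩
      rcases lt_or_ge p m with hpm | hmp
      · have := h.off_lt_on_of_le (p := p + 1) hpm hm
        omega
      · have := h.off_mono (Nat.add_le_add_right hmp 1) hp
        omega

theorem notMem_of_gap (h : IsSwitchEnum A N i k) (hm : m < N) {j : ℕ} (hk : k m < j)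
    (hi : (j : ℤ) ≤ i (m + 1)) : j ∉ A := by
  rw [h.mem_iff]
  rintro ⟨p, hp, hip, hkp⟩
  rcases lt_trichotomy p m with hpm | rfl | hmp
  · have := h.off_mono (p := p + 1) hpm hm.le
    omega
  · omega
  · have := h.off_lt_on_of_le (p := m + 1) hmp hp
    have := h.on_lt_off m hm
    omega

theorem exists_nat_switches (h : IsSwitchEnum A N i k) (hm : m < N) :
    ∃ a b : ℕ, i (m + 1) = a ∧ k (m + 1) = b ∧ a < b ∧ a ∉ A ∧ (b ∈ A ∧ b + 1 ∉ A) ∧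
      ∀ j, a < j → j ≤ b → j ∈ A := by
  obtain ⟨a, ha⟩ := Int.eq_ofNat_of_zero_le (h.on_nonneg hm)
  obtain ⟨b, hb⟩ := Int.eq_ofNat_of_zero_le (h.off_nonneg hm)
  have := h.on_lt_off m hm
  exact ⟨a, b, ha, hb, by omega, ((h.on_iff a).2 ⟨m, hm, ha.symm⟩).1,
    (h.off_iff b).2 ⟨m, hm, hb.symm⟩, fun j haj hjb => h.mem_iff.2 ⟨m, hm, by omega, by omega⟩⟩

end IsSwitchEnum

end Switches

section Flag

variable {L : ℤ} {η : ℕ → ℤ} {j : ℕ}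

theorem flag_eq_zero_or_one (L : ℤ) (η : ℕ → ℤ) (j : ℕ) : flag L η j = 0 ∨ flag L η j = 1 := by
  induction j with
  | zero => exact Or.inl rfl
  | succ j ih =>
    rw [flag]
    split_ifs <;> simp [ih]

theorem flag_ne_one_iff : flag L η j ≠ 1 ↔ flag L η j = 0 := by
  have := flag_eq_zero_or_one L η j
  omega

theorem add_le_of_flag_eq_zero (h : flag L η (j + 1) = 0) : η j + η (j + 1) ≤ L := by
  rw [flag] at h
  split_ifs at h <;> omega

theorem le_add_of_flag_eq_one (h : flag L η (j + 1) = 1) : L ≤ η j + η (j + 1) := by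
  rw [flag] at h
  split_ifs at h <;> omega

theorem add_lt_of_flag_off (h : flag L η j = 1) (h' : flag L η (j + 1) = 0) :
    η j + η (j + 1) < L := by
  rw [flag] at h'
  split_ifs at h' <;> omega

theorem lt_add_of_flag_on (h : flag L η j = 0) (h' : flag L η (j + 1) = 1) :
    L < η j + η (j + 1) := by
  rw [flag] at h'
  split_ifs at h' <;> omega

theorem notMem_Iset_of_flag_eq_zero (h : flag L η j = 0) : j ∉ Iset L η :=
  fun hI => zero_ne_one (h.symm.trans hI.1)

theorem notMem_Iset_of_flag_succ_eq_one (h : flag L η (j + 1) = 1) : j ∉ Iset L η :=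
  fun hI => one_ne_zero (h.symm.trans hI.2)

end Flag

section RunLengths

/-- The claimed length of the run of zeros between a soliton ending at box `a` and the next one,
starting at box `b`. -/
noncomputable def zeroRunLen (L : ℕ) (η : ℕ → ℤ) (a b : ℤ) : ℤ :=
  L + ∑ j ∈ Finset.Icc a (b - 1), ((L : ℤ) - etaExt L η j - etaExt L η (j + 1))

/-- The claimed length of the run of ones of a soliton occupying the boxes from `a` to `b`. -/
noncomputable def oneRunLen (L : ℕ) (η : ℕ → ℤ) (a b : ℤ) : ℤ :=
  L + ∑ j ∈ Finset.Icc a (b - 1), (etaExt L η j + etaExt L η (j + 1) - (L : ℤ))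

variable {L : ℕ} {η : ℕ → ℤ}

theorem etaExt_natCast (L : ℕ) (η : ℕ → ℤ) (j : ℕ) : etaExt L η j = η j := by
  simp [etaExt]

theorem etaExt_natCast_add_one (L : ℕ) (η : ℕ → ℤ) (j : ℕ) : etaExt L η (j + 1) = η (j + 1) :=
  mod_cast etaExt_natCast L η (j + 1)

theorem sum_Icc_add_one_sub_one {α : Type*} [AddCommMonoid α] (f : ℤ → α) {a b : ℤ} (h : a ≤ b) :
    ∑ j ∈ Finset.Icc a (b + 1 - 1), f j = ∑ j ∈ Finset.Icc a (b - 1), f j + f b := by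
  rw [add_sub_cancel_right, ← Finset.insert_Icc_sub_one_right_eq_Icc h, Finset.sum_insert (by simp),
    add_comm]

@[simp]
theorem zeroRunLen_self (L : ℕ) (η : ℕ → ℤ) (a : ℤ) : zeroRunLen L η a a = L := by
  simp [zeroRunLen]

@[simp]
theorem oneRunLen_self (L : ℕ) (η : ℕ → ℤ) (a : ℤ) : oneRunLen L η a a = L := by
  simp [oneRunLen]

theorem zeroRunLen_succ {a : ℤ} {b : ℕ} (h : a ≤ b) : zeroRunLen L η a (b + 1 : ℕ) =
    zeroRunLen L η a b + (L - η b - η (b + 1)) := by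
  push_cast
  rw [zeroRunLen, sum_Icc_add_one_sub_one _ h, etaExt_natCast, etaExt_natCast_add_one, ← add_assoc,
    zeroRunLen]

theorem oneRunLen_succ {a : ℤ} {b : ℕ} (h : a ≤ b) : oneRunLen L η a (b + 1 : ℕ) =
    oneRunLen L η a b + (η b + η (b + 1) - L) := by
  push_cast
  rw [oneRunLen, sum_Icc_add_one_sub_one _ h, etaExt_natCast, etaExt_natCast_add_one, ← add_assoc,
    oneRunLen]

theorem zeroRunLen_neg_one_zero (L : ℕ) (η : ℕ → ℤ) : zeroRunLen L η (-1) 0 = L - η 0 := by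
  simp [zeroRunLen, etaExt, sub_eq_add_neg]

theorem zeroRunLen_neg_one_nonneg (h0 : η 0 ≤ L) {b : ℕ}
    (hflag : ∀ j ≤ b, flag L η j = 0) : 0 ≤ zeroRunLen L η (-1) b := by
  induction b with
  | zero => simpa [zeroRunLen_neg_one_zero] using h0
  | succ b ih =>
    have := ih fun j hj => hflag j (by omega)
    have := add_le_of_flag_eq_zero (hflag (b + 1) le_rfl)
    rw [zeroRunLen_succ (by omega)]
    omega

theorem lt_zeroRunLen {a b : ℕ} (hab : a < b) (ha : flag L η a = 1)
    (hflag : ∀ j, a < j → j ≤ b → flag L η j = 0) : (L : ℤ) < zeroRunLen L η a b := by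
  induction b, hab using Nat.le_induction with
  | base =>
    have := add_lt_of_flag_off ha (hflag (a + 1) (by omega) le_rfl)
    rw [zeroRunLen_succ le_rfl, zeroRunLen_self]
    omega
  | succ b hab ih =>
    have := ih fun j haj hjb => hflag j haj (by omega)
    have := add_le_of_flag_eq_zero (hflag (b + 1) (by omega) le_rfl)
    rw [zeroRunLen_succ (by omega)]
    omega

theorem lt_oneRunLen {a b : ℕ} (hab : a < b) (ha : flag L η a = 0)
    (hflag : ∀ j, a < j → j ≤ b → flag L η j = 1) : (L : ℤ) < oneRunLen L η a b := by
  induction b, hab using Nat.le_induction with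
  | base =>
    have := lt_add_of_flag_on ha (hflag (a + 1) (by omega) le_rfl)
    rw [oneRunLen_succ le_rfl, oneRunLen_self]
    omega
  | succ b hab ih =>
    have := ih fun j haj hjb => hflag j haj (by omega)
    have := le_add_of_flag_eq_one (hflag (b + 1) (by omega) le_rfl)
    rw [oneRunLen_succ (by omega)]
    omega

end RunLengths

section Words

/-- The bounds `0 ≤ η̃ j ≤ L̃` that hold for every state in `S_{L,M}`. -/
def IsAdmissible (L M : ℕ) (η : ℕ → ℤ) : Prop := ∀ j, -(M : ℤ) ≤ η j ∧ η j ≤ L + M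

open scoped Classical in
/-- The position in `d̃(η)` at which the ones of the word of box `j` begin. -/
noncomputable def oneLo (L M : ℕ) (η : ℕ → ℤ) (j : ℕ) : ℤ :=
  if j ∈ Iset L η then wordStart L M η j
  else wordStart L M η j + (L + M - η j - bprev L M η j)

open scoped Classical in
/-- The position in `d̃(η)` just after the ones of the word of box `j`. -/
noncomputable def oneHi (L M : ℕ) (η : ℕ → ℤ) (j : ℕ) : ℤ :=
  if j ∈ Iset L η then wordStart L M η j + (η j + M) else wordStart L M η (j + 1)

variable {L M : ℕ} {η : ℕ → ℤ} {j : ℕ}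

theorem oneLo_of_mem (h : j ∈ Iset L η) : oneLo L M η j = wordStart L M η j := if_pos h

theorem oneLo_of_notMem (h : j ∉ Iset L η) :
    oneLo L M η j = wordStart L M η j + (L + M - η j - bprev L M η j) := if_neg h

theorem oneHi_of_mem (h : j ∈ Iset L η) : oneHi L M η j = wordStart L M η j + (η j + M) := if_pos h

theorem oneHi_of_notMem (h : j ∉ Iset L η) : oneHi L M η j = wordStart L M η (j + 1) := if_neg h

theorem btilde_of_mem_Iset (h : j ∈ Iset L η) : btilde L M η j = 0 := if_pos (Or.inl h)

theorem btilde_of_succ_mem_Iset (h : j + 1 ∈ Iset L η) : btilde L M η j = 0 := if_pos (Or.inr h)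

theorem btilde_of_notMem_Iset (h : j ∉ Iset L η) (h' : j + 1 ∉ Iset L η) :
    btilde L M η j = min (η j + M) (L + 2 * M - (η (j + 1) + M)) := if_neg (not_or_intro h h')

theorem btilde_of_flag_eq_zero (h : flag L η j = 0) (h' : flag L η (j + 1) = 0) :
    btilde L M η j = η j + M := by
  have := add_le_of_flag_eq_zero h'
  rw [btilde_of_notMem_Iset (notMem_Iset_of_flag_eq_zero h) (notMem_Iset_of_flag_eq_zero h'),
    min_eq_left (by omega)]

theorem btilde_of_flag_succ_eq_one (h : flag L η (j + 1) = 1) (h' : j + 1 ∉ Iset L η) :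
    btilde L M η j = L + M - η (j + 1) := by
  have := le_add_of_flag_eq_one h
  rw [btilde_of_notMem_Iset (notMem_Iset_of_flag_succ_eq_one h) h', min_eq_right (by omega)]
  ring

theorem dTilde_eq_zero_or_one (L M : ℕ) (η : ℕ → ℤ) (n : ℕ) :
    dTilde L M η n = 0 ∨ dTilde L M η n = 1 := by
  unfold dTilde
  split_ifs <;> simp

theorem wordStart_succ (L M : ℕ) (η : ℕ → ℤ) (j : ℕ) :
    wordStart L M η (j + 1) = wordStart L M η j + wordLen L M η j :=
  Finset.sum_range_succ _ j

theorem wordStart_succ_of_mem (h : j ∈ Iset L η) :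
    wordStart L M η (j + 1) = wordStart L M η j + (L + 2 * M) := by
  rw [wordStart_succ, wordLen, if_pos h]

theorem oneHi_eq_oneLo_succ (h : flag L η (j + 1) = 1) :
    oneHi L M η j = oneLo L M η (j + 1) := by
  rw [oneHi_of_notMem (notMem_Iset_of_flag_succ_eq_one h)]
  by_cases hI : j + 1 ∈ Iset L η
  · rw [oneLo_of_mem hI]
  · rw [oneLo_of_notMem hI, bprev, btilde_of_flag_succ_eq_one h hI]
    ring

theorem oneLo_succ_of_mem_Iset (h : j ∈ Iset L η) :
    oneLo L M η (j + 1) = oneHi L M η j + (L + (L - η j - η (j + 1))) + 2 * M := by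
  rw [oneLo_of_notMem (notMem_Iset_of_flag_eq_zero h.2), bprev, btilde_of_mem_Iset h,
    wordStart_succ_of_mem h, oneHi_of_mem h]
  push_cast
  ring

namespace IsAdmissible

theorem btilde_le (hη : IsAdmissible L M η) (j : ℕ) :
    btilde L M η j ≤ η j + M ∧ btilde L M η j ≤ L + M - η (j + 1) := by
  have := hη j
  have := hη (j + 1)
  unfold btilde
  split_ifs <;> omega

theorem bprev_le (hη : IsAdmissible L M η) : ∀ j, bprev L M η j ≤ L + M - η j
  | 0 => sub_nonneg.2 (hη 0).2
  | j + 1 => (hη.btilde_le j).2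

theorem wordStart_succ_of_notMem (hη : IsAdmissible L M η) (h : j ∉ Iset L η) :
    (wordStart L M η (j + 1) : ℤ) =
      wordStart L M η j + (L + 2 * M - bprev L M η j - btilde L M η j) := by
  have := (hη.btilde_le j).1
  have := hη.bprev_le j
  rw [wordStart_succ, wordLen, if_neg h]
  push_cast
  rw [Int.toNat_of_nonneg (by omega)]

theorem wordStart_le_oneLo (hη : IsAdmissible L M η) (j : ℕ) :
    wordStart L M η j ≤ oneLo L M η j := by
  have := hη.bprev_le j
  unfold oneLo
  split_ifs <;> omega

theorem oneLo_le_oneHi (hη : IsAdmissible L M η) (j : ℕ) : oneLo L M η j ≤ oneHi L M η j := by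
  by_cases h : j ∈ Iset L η
  · have := hη j
    rw [oneLo_of_mem h, oneHi_of_mem h]
    omega
  · have := (hη.btilde_le j).1
    rw [oneLo_of_notMem h, oneHi_of_notMem h, hη.wordStart_succ_of_notMem h]
    omega

theorem oneHi_le_wordStart_succ (hη : IsAdmissible L M η) (j : ℕ) :
    oneHi L M η j ≤ wordStart L M η (j + 1) := by
  by_cases h : j ∈ Iset L η
  · have := hη j
    rw [oneHi_of_mem h, wordStart_succ_of_mem h]
    omega
  · rw [oneHi_of_notMem h]

theorem oneHi_le_oneLo_succ (hη : IsAdmissible L M η) (j : ℕ) :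
    oneHi L M η j ≤ oneLo L M η (j + 1) :=
  (hη.oneHi_le_wordStart_succ j).trans (hη.wordStart_le_oneLo (j + 1))

theorem oneLo_mono (hη : IsAdmissible L M η) : Monotone (oneLo L M η) :=
  monotone_nat_of_le_succ fun j => (hη.oneLo_le_oneHi j).trans (hη.oneHi_le_oneLo_succ j)

theorem oneHi_mono (hη : IsAdmissible L M η) : Monotone (oneHi L M η) :=
  monotone_nat_of_le_succ fun j => (hη.oneHi_le_oneLo_succ j).trans (hη.oneLo_le_oneHi (j + 1))

theorem dTilde_eq_one_iff (hη : IsAdmissible L M η) {n : ℕ} :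
    dTilde L M η n = 1 ↔ ∃ j, (n : ℤ) ∈ Set.Ico (oneLo L M η j) (oneHi L M η j) := by
  simp only [dTilde, ite_eq_left_iff, zero_ne_one, imp_false, not_not, Set.mem_Ico]
  refine exists_congr fun j => ?_
  have := hη.wordStart_le_oneLo j
  have := hη.oneHi_le_wordStart_succ j
  by_cases h : j ∈ Iset L η
  · rw [oneLo_of_mem h, oneHi_of_mem h] at *
    simp only [h, true_and, not_true, false_and, or_false]
    omega
  · rw [oneLo_of_notMem h, oneHi_of_notMem h] at *
    simp only [h, not_false_eq_true, true_and, false_and, false_or]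
    omega

theorem oneHi_eq_oneLo_of_flag_eq_zero (hη : IsAdmissible L M η) (h : flag L η j = 0)
    (h' : flag L η (j + 1) = 0) : oneHi L M η j = oneLo L M η j := by
  have hI := notMem_Iset_of_flag_eq_zero h
  rw [oneHi_of_notMem hI, oneLo_of_notMem hI, hη.wordStart_succ_of_notMem hI,
    btilde_of_flag_eq_zero h h']
  ring

theorem oneLo_succ_of_flag_eq_zero (hη : IsAdmissible L M η) (h : flag L η j = 0)
    (h' : flag L η (j + 1) = 0) :
    oneLo L M η (j + 1) = oneLo L M η j + (L - η j - η (j + 1)) := by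
  rw [← hη.oneHi_eq_oneLo_of_flag_eq_zero h h', oneHi_of_notMem (notMem_Iset_of_flag_eq_zero h),
    oneLo_of_notMem (notMem_Iset_of_flag_eq_zero h'), bprev, btilde_of_flag_eq_zero h h']
  ring

theorem oneLo_succ_of_flag_eq_one (hη : IsAdmissible L M η) (h : flag L η (j + 1) = 1)
    (h' : flag L η (j + 2) = 1) :
    oneLo L M η (j + 1) = oneLo L M η j + (η j + η (j + 1) - L) := by
  have hI := notMem_Iset_of_flag_succ_eq_one h
  rw [← oneHi_eq_oneLo_succ h, oneHi_of_notMem hI, oneLo_of_notMem hI,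
    hη.wordStart_succ_of_notMem hI,
    btilde_of_flag_succ_eq_one h (notMem_Iset_of_flag_succ_eq_one h')]
  ring

theorem oneHi_succ_of_mem_Iset (hη : IsAdmissible L M η) (h : j + 1 ∈ Iset L η) :
    oneHi L M η (j + 1) = oneLo L M η j + (η j + η (j + 1)) + 2 * M := by
  have hI := notMem_Iset_of_flag_succ_eq_one h.1
  rw [oneHi_of_mem h, oneLo_of_notMem hI, hη.wordStart_succ_of_notMem hI,
    btilde_of_succ_mem_Iset h]
  ring

theorem oneLo_eq_zeroRunLen_neg_one (hη : IsAdmissible L M η) {b : ℕ}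
    (hflag : ∀ j ≤ b, flag L η j = 0) : oneLo L M η b = zeroRunLen L η (-1) b + M := by
  induction b with
  | zero =>
    rw [oneLo_of_notMem (notMem_Iset_of_flag_eq_zero rfl), Nat.cast_zero, zeroRunLen_neg_one_zero]
    simp only [wordStart, Finset.range_zero, Finset.sum_empty, Nat.cast_zero, bprev]
    ring
  | succ b ih =>
    rw [hη.oneLo_succ_of_flag_eq_zero (hflag b b.le_succ) (hflag (b + 1) le_rfl),
      ih fun j hj => hflag j (by omega), zeroRunLen_succ (by omega)]
    ring

theorem oneLo_eq_oneHi_add_zeroRunLen (hη : IsAdmissible L M η) {a b : ℕ} (hab : a < b)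
    (ha : a ∈ Iset L η) (hflag : ∀ j, a < j → j ≤ b → flag L η j = 0) :
    oneLo L M η b = oneHi L M η a + zeroRunLen L η a b + 2 * M := by
  induction b, hab using Nat.le_induction with
  | base => rw [oneLo_succ_of_mem_Iset ha, zeroRunLen_succ le_rfl, zeroRunLen_self]
  | succ b hab ih =>
    rw [hη.oneLo_succ_of_flag_eq_zero (hflag b hab b.le_succ) (hflag (b + 1) (by omega) le_rfl),
      ih fun j haj hjb => hflag j haj (by omega), zeroRunLen_succ (by omega)]
    ring

theorem oneLo_add_eq_oneRunLen (hη : IsAdmissible L M η) {a b : ℕ} (hab : a ≤ b)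
    (hflag : ∀ j, a < j → j ≤ b + 1 → flag L η j = 1) :
    oneLo L M η b + L = oneLo L M η a + oneRunLen L η a b := by
  induction b, hab using Nat.le_induction with
  | base => rw [oneRunLen_self]
  | succ b hab ih =>
    rw [hη.oneLo_succ_of_flag_eq_one (hflag (b + 1) (by omega) (by omega))
      (hflag (b + 2) (by omega) le_rfl), oneRunLen_succ (by omega)]
    linarith [ih fun j haj hjb => hflag j haj (by omega)]

theorem oneHi_eq_oneLo_add_oneRunLen (hη : IsAdmissible L M η) {a b : ℕ} (hab : a < b)
    (hb : b ∈ Iset L η) (hflag : ∀ j, a < j → j ≤ b → flag L η j = 1) :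
    oneHi L M η b = oneLo L M η a + oneRunLen L η a b + 2 * M := by
  obtain ⟨c, rfl⟩ := Nat.exists_eq_add_of_le' (Nat.succ_le_of_lt (Nat.zero_lt_of_lt hab))
  rw [hη.oneHi_succ_of_mem_Iset hb, oneRunLen_succ (by omega)]
  linarith [hη.oneLo_add_eq_oneRunLen (Nat.le_of_lt_succ hab) hflag]

end IsAdmissible

theorem exists_mem_Ico_of_chain {α : Type*} [LinearOrder α] {l u : ℕ → α} {x : α} {a b : ℕ}
    (hab : a ≤ b) (hchain : ∀ j, a ≤ j → j < b → l (j + 1) ≤ u j) (hx : x ∈ Set.Ico (l a) (u b)) :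
    ∃ j, a ≤ j ∧ j ≤ b ∧ x ∈ Set.Ico (l j) (u j) := by
  induction b, hab using Nat.le_induction with
  | base => exact ⟨a, le_rfl, le_rfl, hx⟩
  | succ b hab ih =>
    rcases lt_or_ge x (u b) with hxu | hux
    · obtain ⟨j, haj, hjb, hj⟩ := ih (fun j haj hjb => hchain j haj (by omega)) ⟨hx.1, hxu⟩
      exact ⟨j, haj, by omega, hj⟩
    · exact ⟨b + 1, by omega, le_rfl, (hchain b hab b.lt_succ_self).trans hux, hx.2⟩

end Words

section Solitons

variable {L M N m : ℕ} {η : ℕ → ℤ} {i k : ℕ → ℤ}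

namespace IsSwitchEnum

theorem mem_soliton_or_flag_eq_zero (h : IsSwitchEnum {j | flag L η j = 1} N i k) (j : ℕ) :
    (∃ m < N, i (m + 1) ≤ j ∧ (j : ℤ) ≤ k (m + 1)) ∨ flag L η j = 0 ∧ flag L η (j + 1) = 0 := by
  rcases flag_eq_zero_or_one L η j with h0 | h1
  · rcases flag_eq_zero_or_one L η (j + 1) with h0' | h1'
    · exact Or.inr ⟨h0, h0'⟩
    · obtain ⟨m, hm, hi, hk⟩ := h.mem_iff.1 h1'
      push_cast at hi hk
      exact Or.inl ⟨m, hm, by omega, by omega⟩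
  · obtain ⟨m, hm, hi, hk⟩ := h.mem_iff.1 h1
    exact Or.inl ⟨m, hm, hi.le, hk⟩

theorem dTilde_eq_one_iff (h : IsSwitchEnum {j | flag L η j = 1} N i k)
    (hη : IsAdmissible L M η) {n : ℕ} : dTilde L M η n = 1 ↔ ∃ m < N,
      (n : ℤ) ∈ Set.Ico (oneLo L M η (i (m + 1)).toNat) (oneHi L M η (k (m + 1)).toNat) := by
  rw [hη.dTilde_eq_one_iff]
  constructor
  · rintro ⟨j, hlo, hhi⟩
    rcases h.mem_soliton_or_flag_eq_zero j with ⟨m, hm, hi, hk⟩ | ⟨h0, h0'⟩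
    · exact ⟨m, hm, (hη.oneLo_mono (by omega)).trans hlo,
        hhi.trans_le (hη.oneHi_mono (by omega))⟩
    · exact absurd (hlo.trans_lt hhi) (hη.oneHi_eq_oneLo_of_flag_eq_zero h0 h0').not_gt
  · rintro ⟨m, hm, hn⟩
    obtain ⟨a, b, ha, hb, hab, -, -, hflag⟩ := h.exists_nat_switches hm
    rw [ha, hb, Int.toNat_natCast, Int.toNat_natCast] at hn
    obtain ⟨j, -, -, hj⟩ := exists_mem_Ico_of_chain hab.le (fun j haj hjb =>
      (oneHi_eq_oneLo_succ (hflag (j + 1) (by omega) hjb)).ge) hn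
    exact ⟨j, hj⟩

theorem oneHi_off_eq_oneLo_on_add (h : IsSwitchEnum {j | flag L η j = 1} N i k)
    (hη : IsAdmissible L M η) (hm : m < N) : oneHi L M η (k (m + 1)).toNat =
      oneLo L M η (i (m + 1)).toNat + oneRunLen L η (i (m + 1)) (k (m + 1)) + 2 * M := by
  obtain ⟨a, b, ha, hb, hab, -, ⟨hb1, hb0⟩, hflag⟩ := h.exists_nat_switches hm
  rw [ha, hb, Int.toNat_natCast, Int.toNat_natCast]
  exact hη.oneHi_eq_oneLo_add_oneRunLen hab ⟨hb1, flag_ne_one_iff.1 hb0⟩ hflag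

theorem lt_oneRunLen (h : IsSwitchEnum {j | flag L η j = 1} N i k) (hm : m < N) :
    (L : ℤ) < oneRunLen L η (i (m + 1)) (k (m + 1)) := by
  obtain ⟨a, b, ha, hb, hab, ha0, -, hflag⟩ := h.exists_nat_switches hm
  rw [ha, hb]
  exact BBS.lt_oneRunLen hab (flag_ne_one_iff.1 ha0) hflag

theorem flag_eq_zero_of_le_first (h : IsSwitchEnum {j | flag L η j = 1} N i k) (hN : 0 < N)
    {j : ℕ} (hj : (j : ℤ) ≤ i 1) : flag L η j = 0 :=
  flag_ne_one_iff.1 (h.notMem_of_gap hN (h.off_zero.trans_lt (by omega)) hj)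

theorem oneLo_first_on_eq (h : IsSwitchEnum {j | flag L η j = 1} N i k) (hη : IsAdmissible L M η)
    (hN : 0 < N) : oneLo L M η (i 1).toNat = zeroRunLen L η (k 0) (i 1) + M := by
  have hi : ((i 1).toNat : ℤ) = i 1 := Int.toNat_of_nonneg (h.on_nonneg hN)
  rw [hη.oneLo_eq_zeroRunLen_neg_one fun j hj => h.flag_eq_zero_of_le_first hN (by omega),
    hi, h.off_zero]

theorem zeroRunLen_first_nonneg (h : IsSwitchEnum {j | flag L η j = 1} N i k) (h0 : η 0 ≤ L)
    (hN : 0 < N) : 0 ≤ zeroRunLen L η (k 0) (i 1) := by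
  have hi : ((i 1).toNat : ℤ) = i 1 := Int.toNat_of_nonneg (h.on_nonneg hN)
  rw [← hi, h.off_zero]
  exact zeroRunLen_neg_one_nonneg h0 fun j hj => h.flag_eq_zero_of_le_first hN (by omega)

theorem exists_nat_gap (h : IsSwitchEnum {j | flag L η j = 1} N i k) (hm : m + 1 < N) :
    ∃ a b : ℕ, k (m + 1) = a ∧ i (m + 1 + 1) = b ∧ a < b ∧ a ∈ Iset L η ∧
      ∀ j, a < j → j ≤ b → flag L η j = 0 := by
  obtain ⟨-, a, -, ha, -, -, ⟨ha1, ha0⟩, -⟩ := h.exists_nat_switches (Nat.lt_of_succ_lt hm)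
  obtain ⟨b, -, hb, -⟩ := h.exists_nat_switches hm
  have hab := h.off_lt_on (m + 1) hm
  exact ⟨a, b, ha, hb, by omega, ⟨ha1, flag_ne_one_iff.1 ha0⟩, fun j haj hjb =>
    flag_ne_one_iff.1 (h.notMem_of_gap hm (by omega) (by omega))⟩

theorem oneLo_on_succ_eq_oneHi_off_add (h : IsSwitchEnum {j | flag L η j = 1} N i k)
    (hη : IsAdmissible L M η) (hm : m + 1 < N) : oneLo L M η (i (m + 1 + 1)).toNat =
      oneHi L M η (k (m + 1)).toNat + zeroRunLen L η (k (m + 1)) (i (m + 1 + 1)) + 2 * M := by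
  obtain ⟨a, b, ha, hb, hab, haI, hflag⟩ := h.exists_nat_gap hm
  rw [ha, hb, Int.toNat_natCast, Int.toNat_natCast]
  exact hη.oneLo_eq_oneHi_add_zeroRunLen hab haI hflag

theorem lt_zeroRunLen (h : IsSwitchEnum {j | flag L η j = 1} N i k) (hm : m + 1 < N) :
    (L : ℤ) < zeroRunLen L η (k (m + 1)) (i (m + 1 + 1)) := by
  obtain ⟨a, b, ha, hb, hab, haI, hflag⟩ := h.exists_nat_gap hm
  rw [ha, hb]
  exact BBS.lt_zeroRunLen hab haI.1 hflag

end IsSwitchEnum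

/-- The exponents `s m` of the closed form of the soliton sequence. -/
noncomputable def zeroRuns (L : ℕ) (η : ℕ → ℤ) (i k : ℕ → ℤ) (m : ℕ) : ℕ :=
  (zeroRunLen L η (k (m - 1)) (i m)).toNat

/-- The exponents `t m` of the closed form of the soliton sequence. -/
noncomputable def oneRuns (L : ℕ) (η : ℕ → ℤ) (i k : ℕ → ℤ) (m : ℕ) : ℕ :=
  (oneRunLen L η (i m) (k m)).toNat

/-- The end of the `m`-th run of ones of `d̃`, as computed from the closed form. -/
noncomputable def raisedEnd (L M : ℕ) (η : ℕ → ℤ) (i k : ℕ → ℤ) (m : ℕ) : ℕ :=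
  runEnd (raiseS M (zeroRuns L η i k)) (raiseT M (oneRuns L η i k)) m

theorem raisedEnd_succ (L M : ℕ) (η : ℕ → ℤ) (i k : ℕ → ℤ) (m : ℕ) :
    raisedEnd L M η i k (m + 1) = raisedEnd L M η i k m +
      (raiseS M (zeroRuns L η i k) (m + 1) + raiseT M (oneRuns L η i k) (m + 1)) :=
  runEnd_succ _ _ m

namespace IsSwitchEnum

theorem raisedEnd_succ_eq_oneHi (h : IsSwitchEnum {j | flag L η j = 1} N i k)
    (hη : IsAdmissible L M η) (hm : m < N)
    (hlo : (raisedEnd L M η i k m + raiseS M (zeroRuns L η i k) (m + 1) : ℤ) =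
      oneLo L M η (i (m + 1)).toNat) :
    (raisedEnd L M η i k (m + 1) : ℤ) = oneHi L M η (k (m + 1)).toNat := by
  have hlen : ((raiseT M (oneRuns L η i k) (m + 1) : ℕ) : ℤ) =
      oneRunLen L η (i (m + 1)) (k (m + 1)) + 2 * M := by
    have := h.lt_oneRunLen hm
    simp only [raiseT, oneRuns]
    omega
  rw [h.oneHi_off_eq_oneLo_on_add hη hm, ← hlo, add_assoc, ← hlen, raisedEnd_succ]
  push_cast
  ring

theorem raisedEnd_add_raiseS_eq_oneLo (h : IsSwitchEnum {j | flag L η j = 1} N i k)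
    (hη : IsAdmissible L M η) (h0 : η 0 ≤ L) (hm : m < N) :
    (raisedEnd L M η i k m + raiseS M (zeroRuns L η i k) (m + 1) : ℤ) =
      oneLo L M η (i (m + 1)).toNat := by
  induction m with
  | zero =>
    have := h.zeroRunLen_first_nonneg h0 hm
    rw [h.oneLo_first_on_eq hη hm]
    simp only [raisedEnd, runEnd_zero, raiseS, zeroRuns, zero_add, if_true, Nat.sub_self]
    omega
  | succ m ih =>
    have hlen : ((raiseS M (zeroRuns L η i k) (m + 1 + 1) : ℕ) : ℤ) =
        zeroRunLen L η (k (m + 1)) (i (m + 1 + 1)) + 2 * M := by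
      have := h.lt_zeroRunLen hm
      rw [raiseS, if_neg (by omega), zeroRuns, Nat.add_sub_cancel]
      omega
    rw [h.raisedEnd_succ_eq_oneHi hη (by omega) (ih (by omega)),
      h.oneLo_on_succ_eq_oneHi_off_add hη hm, hlen]
    ring

theorem isRunDecomp_dTilde (h : IsSwitchEnum {j | flag L η j = 1} N i k)
    (hη : IsAdmissible L M η) (h0 : η 0 ≤ L) :
    IsRunDecomp N (raiseS M (zeroRuns L η i k)) (raiseT M (oneRuns L η i k))
      (dTilde L M η) := by
  refine ⟨fun m hm1 hmN => ?_, fun m hm2 hmN => ?_, ?_⟩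
  · obtain ⟨m, rfl⟩ := Nat.exists_eq_add_of_le' hm1
    have := h.lt_oneRunLen hmN
    simp only [raiseT, oneRuns]
    omega
  · obtain ⟨m, rfl⟩ := Nat.exists_eq_add_of_le' hm2
    have : (L : ℤ) < zeroRunLen L η (k (m + 2 - 1)) (i (m + 2)) := h.lt_zeroRunLen hmN
    refine le_trans ?_ (le_raiseS M _ _)
    simp only [zeroRuns]
    omega
  · refine binary_ext (dTilde_eq_zero_or_one L M η) (runSeq_eq_zero_or_one N _ _) fun n => ?_
    rw [h.dTilde_eq_one_iff hη, runSeq_eq_one_iff]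
    refine exists_congr fun m => and_congr_right fun hm => ?_
    have hlo := h.raisedEnd_add_raiseS_eq_oneLo hη h0 hm
    rw [← hlo, ← h.raisedEnd_succ_eq_oneHi hη hm hlo, Set.mem_Ico]
    norm_cast

end IsSwitchEnum

end Solitons

end BBS

theorem stmt_11_general (L M : ℕ) (η : ℕ → ℤ) (hη : ∀ j, -(M : ℤ) ≤ η j ∧ η j ≤ L + M)
    (h0 : η 0 ≤ L) (N : ℕ) (i k : ℕ → ℤ) (hk0 : k 0 = -1)
    (hi : {j : ℕ | flag L η j = 0 ∧ flag L η (j + 1) = 1} =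
      {j : ℕ | ∃ m, 1 ≤ m ∧ m ≤ N ∧ (j : ℤ) = i m})
    (hk : {j : ℕ | flag L η j = 1 ∧ flag L η (j + 1) = 0} =
      {j : ℕ | ∃ m, 1 ≤ m ∧ m ≤ N ∧ (j : ℤ) = k m})
    (hinter : ∀ m, 1 ≤ m → m ≤ N → k (m - 1) < i m ∧ i m < k m)
    (d : ℕ → ℤ) (hd : IsSolitonSeq L M η d) :
    d = runSeq N
      (fun m => ((L : ℤ) + ∑ j ∈ Finset.Icc (k (m - 1)) (i m - 1),
        ((L : ℤ) - etaExt L η j - etaExt L η (j + 1))).toNat)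
      (fun m => ((L : ℤ) + ∑ j ∈ Finset.Icc (i m) (k m - 1),
        (etaExt L η j + etaExt L η (j + 1) - (L : ℤ))).toNat) := by
  have hswitch : IsSwitchEnum {j | flag L η j = 1} N i k :=
    { zero_notMem := zero_ne_one
      off_zero := hk0
      on_iff := fun j => (and_congr_left' flag_ne_one_iff).trans
        ((Set.ext_iff.1 hi j).trans exists_one_le_le_iff)
      off_iff := fun j => (and_congr_right' flag_ne_one_iff).trans
        ((Set.ext_iff.1 hk j).trans exists_one_le_le_iff)
      off_lt_on := fun m hm => (hinter (m + 1) (Nat.le_add_left 1 m) hm).1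
      on_lt_off := fun m hm => (hinter (m + 1) (Nat.le_add_left 1 m) hm).2 }
  have hruns := hd.eq_runSeq (hswitch.isRunDecomp_dTilde hη h0)
  rwa [shrinkS_raiseS, shrinkT_raiseT] at hruns

/-- closed form of the soliton sequence
`d(η) = 0^{s_1}1^{t_1}⋯1^{t_N}0^∞` with
`s_m = L + ∑_{j=k_{m-1}}^{i_m-1}(L - η_j - η_{j+1})` and
`t_m = L + ∑_{j=i_m}^{k_m-1}(η_j + η_{j+1} - L)`, with the conventions `k_0 = -1`
and `η_{-1} = L`. -/
theorem stmt_11 (L M : ℕ) (hL : 1 ≤ L) (η : ℕ → ℤ) (hη : mem_S L M η)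
    (N : ℕ) (i k : ℕ → ℤ) (hk0 : k 0 = -1)
    (hi : {j : ℕ | flag L η j = 0 ∧ flag L η (j + 1) = 1} =
      {j : ℕ | ∃ m, 1 ≤ m ∧ m ≤ N ∧ (j : ℤ) = i m})
    (hk : {j : ℕ | flag L η j = 1 ∧ flag L η (j + 1) = 0} =
      {j : ℕ | ∃ m, 1 ≤ m ∧ m ≤ N ∧ (j : ℤ) = k m})
    (hinter : ∀ m, 1 ≤ m → m ≤ N → k (m - 1) < i m ∧ i m < k m)
    (d : ℕ → ℤ) (hd : IsSolitonSeq L M η d) :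
    d = runSeq N
      (fun m => ((L : ℤ) + ∑ j ∈ Finset.Icc (k (m - 1)) (i m - 1),
        ((L : ℤ) - etaExt L η j - etaExt L η (j + 1))).toNat)
      (fun m => ((L : ℤ) + ∑ j ∈ Finset.Icc (i m) (k m - 1),
        (etaExt L η j + etaExt L η (j + 1) - (L : ℤ))).toNat) := by
  exact stmt_11_general L M η hη.2.1 (hη.2.2.1.trans L.cast_nonneg) N i k hk0 hi hk hinter d hd
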